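/- Let (a_k)_{k=0}^∞ be a nonnegative sequence with a_k > 0 for 0 ≤ k ≤ 3 and a_k = 0 for all k ≥ 4. Then (a_k) is a TP_∞-preserver if and only if both polynomials a_0 + a_1 x + a_2 x^2 + a_3 x^3 and a_1 x + a_2 x^2 + a_3 x^3 have only real (necessarily nonpositive) zeros. Moreover, (a_k) maps every TP_∞ sequence to a TP_∞ sequence if and only if it maps every 3-times positive sequence to a TP_∞ sequence. -/

import Mathlib

/-- A real sequence `(a_k)` is totally positive (TP_∞) if all finite minors of the
infinite Toeplitz matrix `(a_{j-i})` (with `a_k = 0` for `k < 0`) are nonnegative. -/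
def IsTotallyPositive (a : ℕ → ℝ) : Prop :=
  ∀ (n : ℕ) (i j : Fin n → ℕ), StrictMono i → StrictMono j →
    0 ≤ (Matrix.of fun p q : Fin n => if i p ≤ j q then a (j q - i p) else 0).det

/-- A real sequence is `m`-times positive (TP_m) if all such minors of order at most `m`
are nonnegative. -/
def IsMultiplyPositive (m : ℕ) (a : ℕ → ℝ) : Prop :=
  ∀ (n : ℕ), n ≤ m → ∀ (i j : Fin n → ℕ), StrictMono i → StrictMono j →
    0 ≤ (Matrix.of fun p q : Fin n => if i p ≤ j q then a (j q - i p) else 0).det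

/-- A nonnegative sequence `(a_k)` is a TP_∞-preserver if for every totally positive
sequence `(b_k)`, the sequence `(a_k b_k)` is totally positive. -/
def IsTPPreserver (a : ℕ → ℝ) : Prop :=
  ∀ b : ℕ → ℝ, IsTotallyPositive b → IsTotallyPositive (fun k => a k * b k)


/-- normalized form of the discriminant inequality -/
lemma G_conc (x y w U : ℝ) (hxw : x ≤ w) (hwy : w ≤ y)
    (hx : 0 ≤ 1 - 4*x - 4*U + 18*x*U - 27*x^2*U^2)
    (hy : 0 ≤ 1 - 4*y - 4*U + 18*y*U - 27*y^2*U^2) :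
    0 ≤ 1 - 4*w - 4*U + 18*w*U - 27*w^2*U^2 := by
  rcases eq_or_lt_of_le (hxw.trans hwy) with h | h
  · have : w = x := by linarith
    rw [this]; exact hx
  have h1 : 0 ≤ (y - x) * (1 - 4*w - 4*U + 18*w*U - 27*w^2*U^2) := by
    have e : (y - x) * (1 - 4*w - 4*U + 18*w*U - 27*w^2*U^2) =
      (y - w) * (1 - 4*x - 4*U + 18*x*U - 27*x^2*U^2) +
      (w - x) * (1 - 4*y - 4*U + 18*y*U - 27*y^2*U^2) + 27*U^2*((w-x)*(y-w)*(y-x)) := by ring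
    rw [e]
    have := mul_nonneg (mul_nonneg (sub_nonneg.2 hxw) (sub_nonneg.2 hwy)) (sub_nonneg.2 h.le)
    have h2 := mul_nonneg (sub_nonneg.2 hwy) hx
    have h3 := mul_nonneg (sub_nonneg.2 hxw) hy
    positivity
  exact nonneg_of_mul_nonneg_right h1 (by linarith)

lemma G_main (s τ u w : ℝ) (hs : 0 < s) (hτ : 0 < τ) (hτ4 : τ ≤ 1/4)
    (hG : 0 ≤ 1 - 4*τ - 4*s + 18*τ*s - 27*τ^2*s^2)
    (hu : 0 < u) (hu1 : u ≤ 1) (hw0 : 0 ≤ w) (hw1 : w ≤ 1) (hwu : 2*u - 1 ≤ w * u^2) :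
    0 ≤ 1 - 4*(τ*w) - 4*(s*u) + 18*(τ*w)*(s*u) - 27*(τ*w)^2*(s*u)^2 := by
  have hsu : 0 < s * u := mul_pos hs hu
  have hs3 : s ≤ 1/3 := by
    by_contra h
    push Not at h
    have h1 : 0 ≤ (3*s-1)^3 := by apply pow_nonneg; linarith
    have h2 : 0 < (3*s-1)^3 := by apply pow_pos; linarith
    have e : 16*(1-3*s)^3 = (-54*(τ*s^2)+18*s-4)^2 + 108 * s^2* (1 - 4*τ - 4*s + 18*τ*s - 27*τ^2*s^2) := by ring
    have : 0 ≤ 108 * s^2* (1 - 4*τ - 4*s + 18*τ*s - 27*τ^2*s^2) := by positivity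
    nlinarith [sq_nonneg (-54*(τ*s^2)+18*s-4)]
  have hs8 : s ≤ 8/27 := by
    by_contra h
    push Not at h
    have h0 : 1 - 4*(1/4) - 4*s + 18*(1/4)*s - 27*(1/4)^2*s^2 < 0 := by nlinarith
    have e : (1 - 4*(1/4) - 4*s + 18*(1/4)*s - 27*(1/4)^2*s^2) - (1 - 4*τ - 4*s + 18*τ*s - 27*τ^2*s^2)
      = (1/4-τ) * (-4+18*s-27*s^2*(1/4+τ)) := by ring
    have h1 : 0 ≤ -4+18*s-27*s^2*(1/4+τ) := by
      have : 27*s^2*(1/4+τ) ≤ 27*s^2*(1/2) := by gcongr; linarith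
      nlinarith
    nlinarith [mul_nonneg (sub_nonneg.2 hτ4) h1]
  have hτw : 0 ≤ τ * w := by positivity
  have hτw1 : τ * w ≤ τ := by nlinarith
  by_cases h : s * u ≤ 1/4
  · apply G_conc 0 (1/4) (τ*w) (s*u) hτw (by linarith)
    · nlinarith
    · nlinarith
  · push Not at h
    have hu2 : 27/32 < u := by nlinarith
    have hs4 : 1/4 < s := by nlinarith
    set W := τ * ((2*u-1)/u^2) with hW
    have hWw : W ≤ τ * w := by
      rw [hW]; gcongr; rw [div_le_iff₀ (by positivity)]; exact hwu
    apply G_conc W τ (τ*w) (s*u) hWw hτw1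
    · have hb : 0 ≤ 4*τ*(1-u) + 4*s*u^2 - 18*τ*s*u + 27*τ^2*s^2*(3*u-1) := by
        -- compare with the value at `τ = 1/4`
        have h2 : 0 ≤ (1/4-τ) * (18*s*u - 27*s^2*(3*u-1)*(τ+1/4) - 4*(1-u)) := by
          apply mul_nonneg (by linarith)
          have k1 : 27*s^2*(3*u-1)*(τ+1/4) ≤ 27*s^2*(3*u-1)*(1/2) := by
            gcongr
            · exact mul_nonneg (by positivity) (by linarith)
            · linarith
          have k2 : s^2 ≤ 1/9 := by nlinarith
          have k3 : s^2*(3*u-1) ≤ 1/9*2 := by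
            apply mul_le_mul k2 (by linarith) (by linarith) (by norm_num)
          linarith
        have h4 : 0 ≤ (1-u) + s*(4*u^2-(9/2)*u+(27/64)*(3*u-1)) := by
          rcases le_total 0 (4*u^2-(9/2)*u+(27/64)*(3*u-1)) with hq | hq
          · have := mul_nonneg hs.le hq
            linarith
          · have := mul_le_mul_of_nonpos_right hs8 hq
            nlinarith [sq_nonneg (u-827/1000)]
        have h5 : 0 ≤ (s-1/4)*(s*(3*u-1)) :=
          mul_nonneg (by linarith) (mul_nonneg hs.le (by linarith))
        have e : 4*τ*(1-u) + 4*s*u^2 - 18*τ*s*u + 27*τ^2*s^2*(3*u-1) =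
          ((1-u) + s*(4*u^2-(9/2)*u+(27/64)*(3*u-1))) + 27/16*((s-1/4)*(s*(3*u-1)))
          + (1/4-τ) * (18*s*u - 27*s^2*(3*u-1)*(τ+1/4) - 4*(1-u)) := by ring
        rw [e]
        linarith
      have e : u^2 * (1 - 4*W - 4*(s*u) + 18*W*(s*u) - 27*W^2*(s*u)^2) =
        u^2 * (1 - 4*τ - 4*s + 18*τ*s - 27*τ^2*s^2) +
        (1-u) * (4*τ*(1-u) + 4*s*u^2 - 18*τ*s*u + 27*τ^2*s^2*(3*u-1)) := by
        rw [hW]; field_simp; ring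
      have h6 : 0 ≤ u^2 * (1 - 4*W - 4*(s*u) + 18*W*(s*u) - 27*W^2*(s*u)^2) := by
        rw [e]
        have := mul_nonneg (sub_nonneg.2 hu1) hb
        positivity
      exact nonneg_of_mul_nonneg_right h6 (by positivity)
    · have e : 1 - 4*τ - 4*(s*u) + 18*τ*(s*u) - 27*τ^2*(s*u)^2 =
        u * (1 - 4*τ - 4*s + 18*τ*s - 27*τ^2*s^2) + (1-u)*(1-4*τ) + 27*τ^2*s^2*(u*(1-u)) := by ring
      rw [e]
      have h1 := mul_nonneg (sub_nonneg.2 hu1) (by linarith : 0 ≤ 1 - 4*τ)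
      have h2 := mul_nonneg hu.le (sub_nonneg.2 hu1)
      positivity

lemma disc_main (a0 a1 a2 a3 b0 b1 b2 b3 : ℝ) (ha0 : 0 < a0) (ha1 : 0 < a1) (ha2 : 0 < a2)
    (ha3 : 0 < a3) (hq : 4*a1*a3 ≤ a2^2)
    (hd : 0 ≤ a1^2*a2^2 - 4*a0*a2^3 - 4*a1^3*a3 + 18*a0*a1*a2*a3 - 27*a0^2*a3^2)
    (hb0 : 0 ≤ b0) (hb1 : 0 ≤ b1) (hb2 : 0 ≤ b2) (hb3 : 0 ≤ b3)
    (h1 : b0*b2 ≤ b1^2) (h2 : b1*b3 ≤ b2^2) (h3 : b0*b3 ≤ b1*b2)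
    (h4 : 0 ≤ b1^3 - 2*b0*b1*b2 + b0^2*b3) :
    0 ≤ (a1*b1)^2*(a2*b2)^2 - 4*(a0*b0)*(a2*b2)^3 - 4*(a1*b1)^3*(a3*b3)
      + 18*(a0*b0)*(a1*b1)*(a2*b2)*(a3*b3) - 27*(a0*b0)^2*(a3*b3)^2 := by
  rcases eq_or_lt_of_le hb0 with h0 | h0
  · rw [← h0]
    have e : (a1*b1)^2*(a2*b2)^2 - 4*(a0*0)*(a2*b2)^3 - 4*(a1*b1)^3*(a3*b3)
      + 18*(a0*0)*(a1*b1)*(a2*b2)*(a3*b3) - 27*(a0*0)^2*(a3*b3)^2 =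
      (a1*b1)^2 * ((a2^2 - 4*a1*a3) * b2^2 + 4*a1*a3*(b2^2-b1*b3)) := by ring
    rw [e]
    have := sub_nonneg.2 hq
    have := sub_nonneg.2 h2
    positivity
  rcases eq_or_lt_of_le hb1 with h10 | h10
  · have hb2' : b2 = 0 := by
      rw [← h10] at h1
      nlinarith
    have hb3' : b3 = 0 := by
      rw [← h10] at h3
      nlinarith
    rw [hb2', hb3']; ring_nf; rfl
  rcases eq_or_lt_of_le hb2 with h20 | h20
  · have hb3' : b3 = 0 := by
      rw [← h20] at h3
      nlinarith
    rw [hb3', ← h20]; ring_nf; rfl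
  have key := G_main (a0*a2/a1^2) (a1*a3/a2^2) (b0*b2/b1^2) (b1*b3/b2^2) (by positivity)
    (by positivity) (by rw [div_le_iff₀ (by positivity)]; linarith)
    (by
      have e : 1 - 4*(a1*a3/a2^2) - 4*(a0*a2/a1^2) + 18*(a1*a3/a2^2)*(a0*a2/a1^2)
          - 27*(a1*a3/a2^2)^2*(a0*a2/a1^2)^2 =
        (a1^2*a2^2 - 4*a0*a2^3 - 4*a1^3*a3 + 18*a0*a1*a2*a3 - 27*a0^2*a3^2) / (a1^2*a2^2) := by
        field_simp
        try ring
      rw [e]; positivity)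
    (by positivity) (by rw [div_le_iff₀ (by positivity)]; linarith) (by positivity)
    (by rw [div_le_iff₀ (by positivity)]; linarith)
    (by
      have e : (b1*b3/b2^2) * (b0*b2/b1^2)^2 - (2*(b0*b2/b1^2) - 1) =
        (b1^3 - 2*b0*b1*b2 + b0^2*b3) / b1^3 := by
        field_simp
        try ring
      have : 0 ≤ (b1*b3/b2^2) * (b0*b2/b1^2)^2 - (2*(b0*b2/b1^2) - 1) := by
        rw [e]; positivity
      linarith)
  have e : (a1*b1)^2*(a2*b2)^2 - 4*(a0*b0)*(a2*b2)^3 - 4*(a1*b1)^3*(a3*b3)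
      + 18*(a0*b0)*(a1*b1)*(a2*b2)*(a3*b3) - 27*(a0*b0)^2*(a3*b3)^2 =
      (a1*b1)^2*(a2*b2)^2 * (1 - 4*((a1*a3/a2^2)*(b1*b3/b2^2)) - 4*((a0*a2/a1^2)*(b0*b2/b1^2))
      + 18*((a1*a3/a2^2)*(b1*b3/b2^2))*((a0*a2/a1^2)*(b0*b2/b1^2))
      - 27*((a1*a3/a2^2)*(b1*b3/b2^2))^2*((a0*a2/a1^2)*(b0*b2/b1^2))^2) := by
    field_simp
    try ring
  rw [e]
  positivity

lemma tp_lin (a : ℕ → ℝ) (d c : ℝ) (hd : 0 ≤ d) (hc : 0 ≤ c) (ha : IsTotallyPositive a) :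
    IsTotallyPositive (fun k => d * a k + c * (if 1 ≤ k then a (k-1) else 0)) := by
  intro n i j hi hj
  let R : ℕ → Fin n → ℝ := fun r q => if r ≤ j q then a (j q - r) else 0
  have e : (Matrix.of fun p q : Fin n => if i p ≤ j q then
      (fun k => d * a k + c * (if 1 ≤ k then a (k-1) else 0)) (j q - i p) else 0) =
      ((fun p => d • R (i p)) + (fun p => c • R (i p + 1)) : Fin n → Fin n → ℝ) := by
    funext p q
    simp only [Matrix.of_apply, Pi.add_apply, Pi.smul_apply, smul_eq_mul, R]
    by_cases h : i p ≤ j q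
    · by_cases h' : i p + 1 ≤ j q
      · have h2 : 1 ≤ j q - i p := by omega
        have h3 : j q - i p - 1 = j q - (i p + 1) := by omega
        simp [h, h', h2, h3]
      · have h2 : ¬ 1 ≤ j q - i p := by omega
        rw [if_pos h, if_pos h, if_neg h', if_neg h2]
    · have h' : ¬ i p + 1 ≤ j q := by omega
      simp [h, h']
  rw [e]
  change 0 ≤ (Matrix.detRowAlternating (R := ℝ) (n := Fin n)).toMultilinearMap _
  rw [MultilinearMap.map_add_univ]
  apply Finset.sum_nonneg
  intro s _
  let v : Fin n → ℝ := fun p => if p ∈ s then d else c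
  let i' : Fin n → ℕ := fun p => if p ∈ s then i p else i p + 1
  have e2 : s.piecewise (fun p => d • R (i p)) (fun p => c • R (i p + 1)) =
      fun p => v p • R (i' p) := by
    funext p
    by_cases h : p ∈ s <;> simp [h, v, i']
  rw [e2, MultilinearMap.map_smul_univ]
  apply mul_nonneg
  · apply Finset.prod_nonneg
    intro p _
    simp only [v]; split_ifs <;> assumption
  · change 0 ≤ Matrix.det (fun p => R (i' p))
    have hm : Monotone i' := by
      intro p p' hpp
      rcases eq_or_lt_of_le hpp with h | h
      · rw [h]
      · have := hi h
        simp only [i']; split_ifs <;> omega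
    by_cases hinj : Function.Injective i'
    · exact ha n i' j (hm.strictMono_of_injective hinj) hj
    · rw [Function.Injective] at hinj
      push Not at hinj
      obtain ⟨p, p', h1, h2⟩ := hinj
      exact (Matrix.det_zero_of_row_eq (M := Matrix.of fun p => R (i' p)) h2
        (by funext q; simp only [Matrix.of_apply]; rw [h1])).ge

lemma tp_delta : IsTotallyPositive (fun k => if k = 0 then 1 else 0) := by
  intro n i j hi hj
  by_cases h : ∀ p, i p = j p
  · have : i = j := funext h
    subst this
    have : (Matrix.of fun p q : Fin n => if i p ≤ i q then
      (fun k : ℕ => if k = 0 then (1:ℝ) else 0) (i q - i p) else 0) = 1 := by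
      ext p q
      simp only [Matrix.of_apply, Matrix.one_apply]
      by_cases hpq : p = q
      · subst hpq; simp
      · have : i p ≠ i q := fun h => hpq (hi.injective h)
        rw [if_neg hpq]
        split_ifs with h1 h2
        · omega
        · rfl
        · rfl
    rw [this]; simp
  · push Not at h
    by_cases h2 : ∀ p, ∃ q, i p = j q
    · exfalso
      choose f hf using h2
      have hfm : StrictMono f := by
        intro p q hpq
        have := hi hpq
        rw [hf, hf] at this
        exact hj.lt_iff_lt.1 this
      obtain ⟨p, hp⟩ := h
      have hid : f = id := by
        have hb : Function.Bijective f := Finite.injective_iff_bijective.1 hfm.injective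
        have := Subsingleton.elim (StrictMono.orderIsoOfSurjective f hfm hb.2) (OrderIso.refl _)
        funext x
        exact congrArg (fun g : Fin n ≃o Fin n => g x) this
      apply hp
      rw [hf, hid]; rfl
    · push Not at h2
      obtain ⟨p, hp⟩ := h2
      rw [Matrix.det_eq_zero_of_row_eq_zero p]
      intro q
      simp only [Matrix.of_apply]
      have := hp q
      split_ifs with h1 h3
      · omega
      · rfl
      · rfl

lemma step_det (n : ℕ) (i j : Fin n → ℕ) (hi : StrictMono i) (hj : StrictMono j) :
    0 ≤ (Matrix.of fun p q : Fin n => if i p ≤ j q then (1:ℝ) else 0).det := by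
  induction n with
  | zero => simp
  | succ n ih =>
    by_cases h0 : i 0 ≤ j 0
    · by_cases h1 : ∃ p : Fin n, i p.succ ≤ j 0
      · obtain ⟨p, hp⟩ := h1
        rw [Matrix.det_zero_of_row_eq (i := 0) (j := p.succ) (Fin.succ_ne_zero p).symm]
        funext q
        have := hj.monotone (Fin.zero_le q)
        simp only [Matrix.of_apply]
        rw [if_pos (by omega), if_pos (by omega)]
      · push Not at h1
        rw [Matrix.det_succ_column_zero, Fin.sum_univ_succ, Finset.sum_eq_zero]
        · have := ih (fun p => i p.succ) (fun p => j p.succ)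
            (hi.comp (Fin.strictMono_succ)) (hj.comp (Fin.strictMono_succ))
          simpa [h0, Matrix.submatrix] using this
        · intro p _
          have := h1 p
          simp [this]
    · rw [Matrix.det_eq_zero_of_column_eq_zero 0]
      intro p
      have := hi.monotone (Fin.zero_le p)
      simp only [Matrix.of_apply]
      rw [if_neg (by omega)]

lemma tp_ones : IsTotallyPositive (fun _ => 1) := fun n i j hi hj => step_det n i j hi hj

lemma tp_ones_shift : IsTotallyPositive (fun k => if k = 0 then 0 else 1) := by
  intro n i j hi hj
  have := step_det n (fun p => i p + 1) j (fun p q h => by have := hi h; simpa using this) hj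
  convert this using 2
  ext p q
  simp only [Matrix.of_apply]
  by_cases h : i p + 1 ≤ j q
  · rw [if_pos h, if_pos (by omega), if_neg (by omega)]
  · rw [if_neg h]
    split_ifs
    · rfl
    · omega
    · rfl

/-- product of three linear factors -/
lemma tp_of_factors (A : ℕ → ℝ) (d1 c1 d2 c2 d3 c3 : ℝ) (hd1 : 0 ≤ d1) (hc1 : 0 ≤ c1)
    (hd2 : 0 ≤ d2) (hc2 : 0 ≤ c2) (hd3 : 0 ≤ d3) (hc3 : 0 ≤ c3)
    (h0 : A 0 = d3*(d1*d2)) (h1 : A 1 = d3*(d1*c2+d2*c1) + c3*(d1*d2))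
    (h2 : A 2 = d3*(c1*c2) + c3*(d1*c2+d2*c1)) (h3 : A 3 = c3*(c1*c2))
    (h4 : ∀ k, 4 ≤ k → A k = 0) : IsTotallyPositive A := by
  have := tp_lin _ d3 c3 hd3 hc3 (tp_lin _ d2 c2 hd2 hc2 (tp_lin _ d1 c1 hd1 hc1 tp_delta))
  convert this using 1
  funext k
  match k with
  | 0 => rw [h0]; norm_num; left; ring
  | 1 => rw [h1]; norm_num; ring
  | 2 => rw [h2]; norm_num; ring
  | 3 => rw [h3]; norm_num; left; ring
  | (k+4) => rw [h4 _ (by omega)]; simp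

lemma quad_factor (g b e : ℝ) (hg : 0 ≤ g) (hb : 0 ≤ b) (he : 0 ≤ e) (h : 4*e*g ≤ b^2) :
    ∃ d1 c1 d2 c2 : ℝ, 0 ≤ d1 ∧ 0 ≤ c1 ∧ 0 ≤ d2 ∧ 0 ≤ c2 ∧ g = d1*d2 ∧ b = d1*c2+d2*c1 ∧
      e = c1*c2 := by
  rcases eq_or_lt_of_le he with h0 | h0
  · exact ⟨g, b, 1, 0, hg, hb, by norm_num, le_rfl, by ring, by ring, by rw [← h0]; ring⟩
  · set S := Real.sqrt (b^2-4*e*g) with hS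
    have hS2 : S^2 = b^2-4*e*g := Real.sq_sqrt (by linarith)
    have hS0 : 0 ≤ S := Real.sqrt_nonneg _
    have hSb : S ≤ b := by
      apply Real.sqrt_le_iff.2 ⟨hb, _⟩
      have : 0 ≤ 4*e*g := by positivity
      linarith
    refine ⟨(b+S)/2, e, (b-S)/(2*e), 1, by linarith, he, ?_, by norm_num, ?_, ?_, by ring⟩
    · apply div_nonneg <;> linarith
    · field_simp
      nlinarith
    · field_simp
      ring

/-- A cubic with positive leading coefficient and nonnegative coefficients has a root `-c ≤ 0`. -/
lemma cubic_root (A0 A1 A2 A3 : ℝ) (h0 : 0 ≤ A0) (h1 : 0 ≤ A1) (h2 : 0 ≤ A2) (h3 : 0 < A3) :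
    ∃ c : ℝ, 0 ≤ c ∧ A0 - A1*c + A2*c^2 - A3*c^3 = 0 := by
  let M := 1 + (A0 + A2)/A3
  have hM : 1 ≤ M := by simp only [M]; have : 0 ≤ (A0 + A2)/A3 := by positivity
                        linarith
  have hMe : A3 * M = A3 + A0 + A2 := by simp only [M]; field_simp; ring
  have hc : ContinuousOn (fun c : ℝ => A0 - A1*c + A2*c^2 - A3*c^3) (Set.Icc 0 M) := by fun_prop
  have := intermediate_value_Icc' (by linarith : (0:ℝ) ≤ M) hc
  have hm : (0:ℝ) ∈ Set.Icc (A0 - A1*M + A2*M^2 - A3*M^3) (A0 - A1*0 + A2*0^2 - A3*0^3) := by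
    constructor
    · have e : A3*M^3 = (A3+A0+A2)*M^2 := by rw [← hMe]; ring
      rw [e]
      have : 1 ≤ M^2 := by nlinarith
      have : 0 ≤ A1 * M := by positivity
      nlinarith
    · simpa using h0
  obtain ⟨c, hc1, hc2⟩ := this hm
  exact ⟨c, hc1.1, hc2⟩

lemma tp_of_disc (A : ℕ → ℝ) (h0 : 0 ≤ A 0) (h1 : 0 ≤ A 1) (h2 : 0 ≤ A 2) (h3 : 0 ≤ A 3)
    (h4 : ∀ k, 4 ≤ k → A k = 0)
    (hd : 0 ≤ A 1^2*A 2^2 - 4*A 0*A 2^3 - 4*A 1^3*A 3 + 18*A 0*A 1*A 2*A 3 - 27*A 0^2*A 3^2) :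
    IsTotallyPositive A := by
  rcases eq_or_lt_of_le h3 with h | h
  · have hq : 4 * A 2 * A 0 ≤ A 1^2 := by
      rw [← h] at hd
      rcases eq_or_lt_of_le h2 with h' | h'
      · rw [← h']; nlinarith [sq_nonneg (A 1)]
      · have : 0 ≤ A 2^2 * (A 1^2 - 4 * A 2 * A 0) := by linarith
        have := nonneg_of_mul_nonneg_right this (by positivity)
        linarith
    obtain ⟨d1, c1, d2, c2, k1, k2, k3, k4, k5, k6, k7⟩ := quad_factor _ _ _ h0 h1 h2 hq
    refine tp_of_factors A d1 c1 d2 c2 1 0 k1 k2 k3 k4 (by norm_num) le_rfl ?_ ?_ ?_ ?_ h4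
    · rw [k5]; ring
    · rw [k6]; ring
    · rw [k7]; ring
    · rw [← h]; ring
  · obtain ⟨c, hc, hr⟩ := cubic_root _ _ _ _ h0 h1 h2 h
    obtain ⟨b, hb⟩ : ∃ b, b = A 2 - A 3 * c := ⟨_, rfl⟩
    obtain ⟨g, hg⟩ : ∃ g, g = A 1 - b * c := ⟨_, rfl⟩
    have e2 : A 2 = b + A 3 * c := by linarith
    have e1 : A 1 = g + b * c := by linarith
    have e0 : A 0 = g * c := by
      rw [e2, e1] at hr
      linarith
    have hq : 4 * A 3 * g ≤ b^2 := by
      rw [e0, e1, e2] at hd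
      have e : 0 ≤ (A 3*c^2-b*c+g)^2 * (b^2 - 4*A 3*g) := by
        refine hd.trans (le_of_eq ?_); ring
      by_cases hz : A 3*c^2-b*c+g = 0
      · have : g = b*c - A 3*c^2 := by linarith
        rw [this]
        nlinarith [sq_nonneg (b - 2*A 3*c)]
      · have := nonneg_of_mul_nonneg_right e (by positivity)
        linarith
    have hbn : 0 ≤ b := by
      by_contra hneg
      push Not at hneg
      -- a positive root of the quadratic
      set S := Real.sqrt (b^2-4*A 3*g) with hS
      have hS2 : S^2 = b^2-4*A 3*g := Real.sq_sqrt (by linarith)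
      have hS0 : 0 ≤ S := Real.sqrt_nonneg _
      have hx : 0 < (-b+S)/(2*A 3) := by apply div_pos <;> linarith
      set x := (-b+S)/(2*A 3) with hxd
      have hroot : A 3*x^2+b*x+g = 0 := by
        rw [hxd]; field_simp; nlinarith
      have : A 0 + A 1*x+A 2*x^2+A 3*x^3 = 0 := by
        rw [e0, e1, e2]
        linear_combination (x + c) * hroot
      have : 0 < A 3*x^3 := by positivity
      have : 0 ≤ A 1 * x := by positivity
      have : 0 ≤ A 2 * x^2 := by positivity
      linarith
    have hgn : 0 ≤ g := by
      by_contra hneg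
      push Not at hneg
      set S := Real.sqrt (b^2-4*A 3*g) with hS
      have hS2 : S^2 = b^2-4*A 3*g := Real.sq_sqrt (by linarith)
      have hS0 : 0 ≤ S := Real.sqrt_nonneg _
      have hSb : b < S := by
        apply Real.lt_sqrt_of_sq_lt
        nlinarith
      have hx : 0 < (-b+S)/(2*A 3) := by apply div_pos <;> linarith
      set x := (-b+S)/(2*A 3) with hxd
      have hroot : A 3*x^2+b*x+g = 0 := by
        rw [hxd]; field_simp; nlinarith
      have : A 0 + A 1*x+A 2*x^2+A 3*x^3 = 0 := by
        rw [e0, e1, e2]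
        linear_combination (x + c) * hroot
      have : 0 < A 3*x^3 := by positivity
      have : 0 ≤ A 1 * x := by positivity
      have : 0 ≤ A 2 * x^2 := by positivity
      linarith
    obtain ⟨d1, c1, d2, c2, k1, k2, k3, k4, k5, k6, k7⟩ := quad_factor _ _ _ hgn hbn h3 hq
    refine tp_of_factors A d1 c1 d2 c2 c 1 k1 k2 k3 k4 hc (by norm_num) ?_ ?_ ?_ ?_ h4
    · rw [e0, k5]; ring
    · rw [e1, ← k6, ← k5]; ring
    · rw [e2, ← k6, ← k7]; ring
    · rw [← k7]; ring

/-- Jacobi's complementary minor identity for upper triangular Toeplitz matrices. -/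
lemma jacobi (n k : ℕ) (a c : ℕ → ℝ)
    (hac : PowerSeries.mk a * PowerSeries.mk c = 1)
    (σ : Equiv.Perm (Fin (n+k)))
    (h1 : ∀ q : Fin n, (σ (Fin.castAdd k q) : ℕ) = q + k)
    (h2 : ∀ l : Fin k, (σ (Fin.natAdd n l) : ℕ) = l) :
    (Matrix.of fun p q : Fin n => if (p:ℕ) ≤ q + k then a (q + k - p) else 0).det =
      (Equiv.Perm.sign σ : ℝ) * a 0 ^ (n+k) *
      (Matrix.of fun p q : Fin k => if (p:ℕ) ≤ n + q then c (n + q - p) else 0).det := by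
  let T : Matrix (Fin (n+k)) (Fin (n+k)) ℝ := Matrix.of fun i j => if (i:ℕ) ≤ j then a (j - i) else 0
  let Z : Matrix (Fin (n+k)) (Fin (n+k)) ℝ := Matrix.of fun i j => if (i:ℕ) ≤ j then c (j - i) else 0
  have hTdet : T.det = a 0 ^ (n+k) := by
    rw [Matrix.det_of_isUpperTriangular]
    · simp [T]
    · intro i j hij
      have : ¬ ((i:ℕ) ≤ j) := by simpa using hij
      simp only [T, Matrix.of_apply, if_neg this]
  have hTZ : T * Z = 1 := by
    ext i j
    rw [Matrix.mul_apply, Matrix.one_apply]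
    simp only [T, Z, Matrix.of_apply]
    by_cases hij : (i:ℕ) ≤ j
    · have := congrArg (PowerSeries.coeff ((j:ℕ) - i)) hac
      rw [PowerSeries.coeff_mul, PowerSeries.coeff_one] at this
      simp only [PowerSeries.coeff_mk] at this
      rw [Finset.Nat.sum_antidiagonal_eq_sum_range_succ (fun x y => a x * c y)] at this
      have e : (if i = j then (1:ℝ) else 0) = if (j:ℕ) - i = 0 then 1 else 0 := by
        congr 1
        rw [Fin.ext_iff, eq_iff_iff]; omega
      rw [e, ← this, Fin.sum_univ_eq_sum_range (fun x => (if (i:ℕ) ≤ x then a (x - i) else 0) *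
        (if x ≤ (j:ℕ) then c (j - x) else 0)) (n+k)]
      rw [← Finset.sum_subset (s₁ := Finset.Ico (i:ℕ) (j+1))]
      · rw [Finset.sum_Ico_eq_sum_range]
        have : (j:ℕ) + 1 - i = ((j:ℕ) - i).succ := by omega
        rw [this]
        apply Finset.sum_congr rfl
        intro x hx
        rw [Finset.mem_range] at hx
        rw [if_pos (by omega), if_pos (by omega)]
        congr 2 <;> omega
      · intro x hx
        rw [Finset.mem_Ico] at hx
        rw [Finset.mem_range]
        omega
      · intro x _ hx
        rw [Finset.mem_Ico] at hx
        by_cases h : (i:ℕ) ≤ x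
        · rw [if_neg (c := x ≤ (j:ℕ)) (by omega)]; simp
        · rw [if_neg h]; simp
    · rw [if_neg (by intro h; apply hij; rw [h])]
      apply Finset.sum_eq_zero
      intro x _
      by_cases h : (i:ℕ) ≤ x
      · rw [if_neg (c := (x:ℕ) ≤ (j:ℕ)) (by omega)]; simp
      · rw [if_neg h]; simp
  let e : Fin n ⊕ Fin k ≃ Fin (n+k) := finSumFinEquiv
  let e' : Fin n ⊕ Fin k ≃ Fin (n+k) := e.trans σ
  let W : Matrix (Fin n ⊕ Fin k) (Fin n ⊕ Fin k) ℝ :=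
    Matrix.of fun x y => Sum.elim (fun q : Fin n => if x = Sum.inl q then 1 else 0)
      (fun l : Fin k => Z (e' x) (e (Sum.inr l))) y
  have hprod : T.submatrix e e' * W = Matrix.fromBlocks
      (Matrix.of fun p q : Fin n => if (p:ℕ) ≤ q + k then a (q + k - p) else 0) 0
      (Matrix.of fun (p : Fin k) (q : Fin n) => T (e (Sum.inr p)) (e' (Sum.inl q))) 1 := by
    have hz : ∀ x l, (T.submatrix e e' * W) x (Sum.inr l) = if e x = e (Sum.inr l) then 1 else 0 := by
      intro x l
      rw [← Matrix.one_apply, ← hTZ, Matrix.mul_apply, Matrix.mul_apply]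
      simp only [W, Matrix.of_apply, Matrix.submatrix_apply, Sum.elim_inr]
      exact Equiv.sum_comp e' (fun z => T (e x) z * Z z (e (Sum.inr l)))
    have hz' : ∀ x q, (T.submatrix e e' * W) x (Sum.inl q) = T (e x) (e' (Sum.inl q)) := by
      intro x q
      rw [Matrix.mul_apply]
      simp [W]
    ext x y
    rcases y with q | l
    · rw [hz']
      rcases x with p | p
      · simp only [T, e, e', Matrix.of_apply, Matrix.fromBlocks_apply₁₁, Equiv.trans_apply,
          finSumFinEquiv_apply_left, h1, Fin.val_castAdd]
      · simp
    · rw [hz]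
      rcases x with p | p
      · simp
      · simp [Matrix.one_apply]
  have hW : W = Matrix.fromBlocks 1 (Matrix.of fun (p : Fin n) (l : Fin k) => W (Sum.inl p) (Sum.inr l)) 0
      (Matrix.of fun p q : Fin k => if (p:ℕ) ≤ n + q then c (n + q - p) else 0) := by
    ext x y
    rcases x with p | p <;> rcases y with q | q
    · simp [W, Matrix.one_apply]
    · simp
    · simp [W]
    · simp only [W, Z, e, e', Matrix.of_apply, Matrix.fromBlocks_apply₂₂, Equiv.trans_apply,
        Sum.elim_inr, finSumFinEquiv_apply_right, h2, Fin.val_natAdd]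
  have hd := congrArg Matrix.det hprod
  rw [Matrix.det_mul, Matrix.det_fromBlocks_zero₁₂, Matrix.det_one, mul_one] at hd
  rw [hW, Matrix.det_fromBlocks_zero₂₁, Matrix.det_one, one_mul] at hd
  rw [← hd]
  congr 1
  have : T.submatrix e e' = (T.submatrix id σ).submatrix e e := by
    ext x y; rfl
  rw [this, Matrix.det_submatrix_equiv_self, Matrix.det_permute', hTdet]

lemma jacobi_one (n : ℕ) (a c : ℕ → ℝ)
    (hac : PowerSeries.mk a * PowerSeries.mk c = 1)
    (ha : IsTotallyPositive a) (ha0 : 0 < a 0) : 0 ≤ (-1)^n * c n := by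
  have := jacobi n 1 a c hac (finRotate (n+1)) ?_ ?_
  · have h := ha n (fun p => p) (fun q => q+1) (fun p q h => h) (fun p q h => by simpa using h)
    rw [this, sign_finRotate] at h
    simp at h
    have h2 : 0 ≤ a 0^(n+1) * ((-1)^n * c n) := by linarith
    exact nonneg_of_mul_nonneg_right h2 (by positivity)
  · intro q
    rw [finRotate_apply]
    rw [Fin.val_add_one_of_lt]
    · simp
    · rw [Fin.lt_def]; simp
  · intro l
    rw [finRotate_apply]
    have : Fin.natAdd n l = Fin.last n := by ext; simp
    rw [this]; simp

lemma jacobi_two (n : ℕ) (a c : ℕ → ℝ)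
    (hac : PowerSeries.mk a * PowerSeries.mk c = 1)
    (ha : IsTotallyPositive a) (ha0 : 0 < a 0) : c n * c (n+2) ≤ c (n+1)^2 := by
  have := jacobi (n+1) 2 a c hac (finRotate (n+1+2) * finRotate (n+1+2)) ?_ ?_
  · have h := ha (n+1) (fun p => p) (fun q => q+2) (fun p q h => h) (fun p q h => by simpa using h)
    rw [this, Equiv.Perm.sign_mul, Int.units_mul_self] at h
    simp [Matrix.det_fin_two] at h
    have h2 : 0 ≤ a 0^(n+1+2) * (c (n+1)^2 - c n * c (n+2)) := by 
      rw [show n + 2 = n + 1 + 1 from rfl]; linarith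
    have := nonneg_of_mul_nonneg_right h2 (by positivity)
    linarith
  · intro q
    have hq := q.2
    rw [Equiv.Perm.mul_apply, finRotate_apply, finRotate_apply]
    rw [Fin.val_add_one_of_lt, Fin.val_add_one_of_lt]
    · simp
    · rw [Fin.lt_def]; simp; omega
    · rw [Fin.lt_def, Fin.val_add_one_of_lt]
      · simp; omega
      · rw [Fin.lt_def]; simp; omega
  · intro l
    rw [Equiv.Perm.mul_apply, finRotate_apply, finRotate_apply]
    fin_cases l
    · have : Fin.natAdd (n+1) (0 : Fin 2) + 1 = Fin.last (n+1+1) := by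
        ext
        rw [Fin.val_add_one_of_lt] 
        · simp
        · rw [Fin.lt_def]; simp
      simp only [Fin.zero_eta]
      erw [this]; simp
    · have : Fin.natAdd (n+1) (1 : Fin 2) = Fin.last (n+1+1) := by ext; simp
      simp only [Fin.mk_one]
      erw [this]; simp

lemma quad_seq (g : ℕ → ℝ) (a b γ : ℝ) (ha : 0 < a) (hγ : 0 < γ) (h0 : 0 < g 0)
    (hg : ∀ n, 0 ≤ g n) (hrec : ∀ n, a * g (n+2) = b * g (n+1) - γ * g n) :
    4 * a * γ ≤ b^2 := by
  by_contra hlt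
  push Not at hlt
  have hpos : ∀ n, 0 < g n := by
    intro n
    induction n with
    | zero => exact h0
    | succ n ih =>
      rcases eq_or_lt_of_le (hg (n+1)) with h | h
      · have := hrec n
        rw [← h] at this
        have h1 := mul_nonneg ha.le (hg (n+2))
        have h2 := mul_pos hγ ih
        linarith
      · exact h
  have hr : ∀ n, a * (g (n+2) / g (n+1)) = b - γ / (g (n+1) / g n) := by
    intro n
    have h1 := hpos n
    have h2 := hpos (n+1)
    field_simp
    linarith [hrec n]
  obtain ⟨r, hrdef⟩ : ∃ r : ℕ → ℝ, ∀ n, r n = g (n+1) / g n := ⟨_, fun n => rfl⟩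
  have hrpos : ∀ n, 0 < r n := by
    intro n; rw [hrdef]; exact div_pos (hpos _) (hpos _)
  have hr' : ∀ n, a * r (n+1) * r n = b * r n - γ := by
    intro n
    have := hr n
    rw [← hrdef (n+1), ← hrdef n] at this
    rw [this]
    have := hrpos n
    field_simp
  have hstep : ∀ n, (4*a*γ - b^2) / (4*a) ≤ a * (r n - r (n+1)) * r n := by
    intro n
    rw [div_le_iff₀ (by positivity)]
    have := hr' n
    nlinarith [sq_nonneg (2*a*r n - b)]
  set δ := (4*a*γ - b^2) / (4*a) with hδ
  have hδpos : 0 < δ := by apply div_pos <;> linarith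
  have hle : ∀ n, r n ≤ r 0 - n * (δ / (a * r 0)) := by
    intro n
    induction n with
    | zero => simp
    | succ n ih =>
      have h00 := hrpos 0
      have e1 : 0 ≤ (n:ℝ) * (δ / (a * r 0)) := by positivity
      have e2 : r n ≤ r 0 := by linarith
      have e3 : 0 < r n - r (n+1) := by
        have h1 := hstep n
        have h2 : 0 < (r n - r (n+1)) * (a * r n) := by linarith
        exact pos_of_mul_pos_left h2 (mul_pos ha (hrpos n)).le
      have e4 : δ / (a * r 0) ≤ r n - r (n+1) := by
        rw [div_le_iff₀ (by positivity)]
        have h1 := hstep n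
        have h2 : (r n - r (n+1)) * (a * r n) ≤ (r n - r (n+1)) * (a * r 0) := by gcongr
        linarith
      push_cast
      linarith
  have hε : 0 < δ / (a * r 0) := by have := hrpos 0; positivity
  obtain ⟨N, hN⟩ := exists_nat_gt (r 0 / (δ / (a * r 0)))
  rw [div_lt_iff₀ hε] at hN
  linarith [hle N, hrpos N]

lemma coeff_rel (a c : ℕ → ℝ) (hac : PowerSeries.mk a * PowerSeries.mk c = 1) (m : ℕ) :
    ∑ k ∈ Finset.range (m+1), a k * c (m - k) = if m = 0 then 1 else 0 := by
  have := congrArg (PowerSeries.coeff m) hac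
  rw [PowerSeries.coeff_mul, PowerSeries.coeff_one] at this
  simp only [PowerSeries.coeff_mk] at this
  rw [Finset.Nat.sum_antidiagonal_eq_sum_range_succ (fun x y => a x * c y)] at this
  exact this

lemma exists_inv (a : ℕ → ℝ) (h : a 0 ≠ 0) :
    ∃ c : ℕ → ℝ, PowerSeries.mk a * PowerSeries.mk c = 1 := by
  refine ⟨fun n => PowerSeries.coeff n (PowerSeries.mk a)⁻¹, ?_⟩
  have e : PowerSeries.mk (fun n => PowerSeries.coeff n (PowerSeries.mk a)⁻¹) = (PowerSeries.mk a)⁻¹ := by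
    ext n; simp
  rw [e]
  apply PowerSeries.mul_inv_cancel
  rw [← PowerSeries.coeff_zero_eq_constantCoeff_apply]
  simpa using h

lemma rec3 (a c : ℕ → ℝ) (h4 : ∀ k, 4 ≤ k → a k = 0)
    (hac : PowerSeries.mk a * PowerSeries.mk c = 1) (n : ℕ) :
    a 0 * c (n+3) + a 1 * c (n+2) + a 2 * c (n+1) + a 3 * c n = 0 := by
  have := coeff_rel a c hac (n+3)
  rw [if_neg (by omega), ← Finset.sum_subset (s₁ := Finset.range 4)] at this
  · simpa [Finset.sum_range_succ] using this
  · intro x hx; rw [Finset.mem_range] at *; omega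
  · intro x _ hx
    rw [Finset.mem_range] at hx
    rw [h4 x (by omega)]; simp

lemma quad_of_tp (d : ℕ → ℝ) (h0 : 0 < d 0) (h2 : 0 < d 2) (h3 : ∀ k, 3 ≤ k → d k = 0)
    (hd : IsTotallyPositive d) : 4 * d 0 * d 2 ≤ d 1 ^ 2 := by
  obtain ⟨c, hac⟩ := exists_inv d h0.ne'
  apply quad_seq (fun n => (-1)^n * c n) (d 0) (d 1) (d 2) h0 h2
  · have := coeff_rel d c hac 0
    simp at this
    simp only [pow_zero, one_mul]
    by_contra h
    push Not at h
    nlinarith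
  · intro n; exact jacobi_one n d c hac hd h0
  · intro n
    rcases n with _ | n
    · have := coeff_rel d c hac 2
      simp [Finset.sum_range_succ] at this
      simp
      linarith
    · have := rec3 d c (fun k hk => h3 k (by omega)) hac n
      rw [h3 3 le_rfl] at this
      simp only [show n + 1 + 2 = n + 3 from rfl, show n + 1 + 1 = n + 2 from rfl, pow_succ]
      linear_combination (-(-1)^n) * this

lemma cubic_of_tp (a : ℕ → ℝ) (hpos : ∀ k ≤ 3, 0 < a k) (h4 : ∀ k, 4 ≤ k → a k = 0)
    (ha : IsTotallyPositive a) :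
    ∃ q b γ : ℝ, a 1 = b + q * a 0 ∧ a 2 = γ + q * b ∧ a 3 = q * γ ∧ 0 < γ ∧ 4 * a 0 * γ ≤ b^2 := by
  have a0 := hpos 0 (by norm_num)
  have a3 := hpos 3 (by norm_num)
  obtain ⟨c, hac⟩ := exists_inv a a0.ne'
  obtain ⟨h, hh⟩ : ∃ h : ℕ → ℝ, ∀ n, h n = (-1)^n * c n := ⟨_, fun n => rfl⟩
  have hc : ∀ n, c n = (-1)^n * h n := by
    intro n; rw [hh, ← mul_assoc, ← mul_pow]; simp
  have hr0 : a 0 * h 0 = 1 := by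
    have := coeff_rel a c hac 0
    simp [hc] at this
    exact this
  have hr1 : a 0 * h 1 = a 1 * h 0 := by
    have := coeff_rel a c hac 1
    simp [Finset.sum_range_succ, hc] at this
    linarith
  have hr2 : a 0 * h 2 = a 1 * h 1 - a 2 * h 0 := by
    have := coeff_rel a c hac 2
    simp [Finset.sum_range_succ, hc] at this
    linarith
  have hr3 : ∀ n, a 0 * h (n+3) = a 1 * h (n+2) - a 2 * h (n+1) + a 3 * h n := by
    intro n
    have := rec3 a c h4 hac n
    rw [hh, hh, hh, hh, pow_succ, pow_succ, pow_succ]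
    linear_combination (-(-1)^n) * this
  have hnn : ∀ n, 0 ≤ h n := by
    intro n; rw [hh]; exact jacobi_one n a c hac ha a0
  have sq1 : ∀ n : ℕ, ((-1:ℝ)^n)^2 = 1 := by
    intro n; rw [← pow_mul, mul_comm, pow_mul]; simp
  have hlc : ∀ n, h n * h (n+2) ≤ h (n+1)^2 := by
    intro n
    have := jacobi_two n a c hac ha a0
    rw [hh, hh, hh, pow_succ, pow_succ]
    have e := sq1 n
    calc _ = ((-1:ℝ)^n)^2 * (c n * c (n+2)) := by ring
      _ ≤ c (n+1)^2 := by rw [e, one_mul]; exact this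
      _ = ((-1:ℝ)^n)^2 * c (n+1)^2 := by rw [e, one_mul]
      _ = _ := by ring
  -- partial sums
  obtain ⟨H, hH⟩ : ∃ H : ℕ → ℝ, ∀ n, H n = ∑ k ∈ Finset.range (n+1), h k := ⟨_, fun n => rfl⟩
  have hHs : ∀ n, H (n+1) = H n + h (n+1) := by
    intro n; rw [hH, hH, Finset.sum_range_succ]
  have hHlc : ∀ n, H n * H (n+2) ≤ H (n+1)^2 := by
    intro n
    have tp := tp_lin a 1 1 (by norm_num) (by norm_num) ha
    have e1 : PowerSeries.mk (fun k => 1 * a k + 1 * (if 1 ≤ k then a (k-1) else 0)) =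
        PowerSeries.mk a * (1 + PowerSeries.X) := by
      ext k
      rw [mul_add, mul_one]
      rcases k with _ | k
      · simp
      · simp [PowerSeries.coeff_succ_mul_X]
    have e2 : (1 + PowerSeries.X) * PowerSeries.mk (fun n => (-1)^n * H n) = PowerSeries.mk c := by
      ext k
      rw [add_mul, one_mul]
      rcases k with _ | k
      · simp [hH, hh]
      · simp only [map_add, PowerSeries.coeff_mk, PowerSeries.coeff_succ_X_mul]
        rw [hc, hHs, pow_succ]; ring
    have e3 : PowerSeries.mk (fun k => 1 * a k + 1 * (if 1 ≤ k then a (k-1) else 0)) *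
        PowerSeries.mk (fun n => (-1)^n * H n) = 1 := by
      rw [e1, mul_assoc, e2, hac]
    have := jacobi_two n _ _ e3 tp (by simpa using a0)
    simp only [pow_succ] at this
    have e := sq1 n
    calc _ = ((-1:ℝ)^n)^2 * (H n * H (n+2)) := by rw [e, one_mul]
      _ = (-1) ^ n * H n * ((-1) ^ n * -1 * -1 * H (n + 2)) := by ring
      _ ≤ _ := this
      _ = ((-1:ℝ)^n)^2 * H (n+1)^2 := by ring
      _ = _ := by rw [e, one_mul]
  have hp0 : 0 < h 0 := by
    rcases eq_or_lt_of_le (hnn 0) with h' | h'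
    · rw [← h'] at hr0; simp at hr0
    · exact h'
  have hHpos : ∀ n, 0 < H n := by
    intro n
    induction n with
    | zero => rw [hH]; simpa using hp0
    | succ n ih => rw [hHs]; linarith [hnn (n+1)]
  have hp : ∀ n, 0 < h n := by
    intro n
    induction n with
    | zero => exact hp0
    | succ n ih =>
      rcases eq_or_lt_of_le (hnn (n+1)) with h' | h'
      · exfalso
        have k1 := hlc n
        rw [← h'] at k1
        have k2 : h (n+2) = 0 := by
          have := hnn (n+2)
          nlinarith
        have k3 := hr3 n
        rw [k2, ← h'] at k3
        have k4 : 0 < h (n+3) := by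
          have : 0 < a 0 * h (n+3) := by rw [k3]; have := mul_pos a3 ih; linarith
          exact pos_of_mul_pos_right this a0.le
        have k5 := hHlc (n+1)
        rw [show n + 1 + 2 = n + 2 + 1 from rfl, hHs (n+2), show n + 1 + 1 = n + 2 from rfl,
          show H (n+2) = H (n+1) by rw [show n + 2 = n + 1 + 1 from rfl, hHs (n+1)]; simp [k2]] at k5
        have := mul_pos (hHpos (n+1)) k4
        rw [show n + 2 + 1 = n + 3 from rfl] at k5
        nlinarith
      · exact h'
  obtain ⟨r, hr⟩ : ∃ r : ℕ → ℝ, ∀ n, r n = h (n+1) / h n := ⟨_, fun n => rfl⟩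
  have ranti : Antitone r := by
    apply antitone_nat_of_succ_le
    intro n
    rw [hr, hr, div_le_div_iff₀ (hp _) (hp _)]
    have := hlc n
    rw [show n + 1 + 1 = n + 2 from rfl]
    linarith
  have rpos : ∀ n, 0 < r n := by intro n; rw [hr]; exact div_pos (hp _) (hp _)
  have rbdd : BddBelow (Set.range r) := ⟨0, by rintro _ ⟨n, rfl⟩; exact (rpos n).le⟩
  have rlim := tendsto_atTop_ciInf ranti rbdd
  have rle : ∀ n, iInf r ≤ r n := fun n => ciInf_le rbdd n
  have qnn : 0 ≤ iInf r := le_ciInf fun n => (rpos n).le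
  obtain ⟨q, hq⟩ : ∃ q, q = iInf r := ⟨_, rfl⟩
  change Filter.Tendsto r Filter.atTop (nhds (iInf r)) at rlim
  rw [← hq] at rlim rle qnn
  have rrec : ∀ n, a 0 * (r (n+2) * r (n+1) * r n) - a 1 * (r (n+1) * r n) + a 2 * r n = a 3 := by
    intro n
    have e1 := hp n
    have e2 := hp (n+1)
    have e3 := hp (n+2)
    rw [hr, hr, hr]
    simp only [show n + 1 + 1 = n + 2 from rfl, show n + 2 + 1 = n + 3 from rfl]
    field_simp
    linarith [hr3 n]
  have hroot : a 0 * (q * q * q) - a 1 * (q * q) + a 2 * q = a 3 := by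
    have l1 := (Filter.tendsto_add_atTop_iff_nat 1).2 rlim
    have l2 := (Filter.tendsto_add_atTop_iff_nat 2).2 rlim
    have l := ((((l2.mul l1).mul rlim).const_mul (a 0)).sub ((l1.mul rlim).const_mul (a 1))).add
      (rlim.const_mul (a 2))
    refine tendsto_nhds_unique l ?_
    simp only [rrec]
    exact tendsto_const_nhds
  have qpos : 0 < q := by
    rcases eq_or_lt_of_le qnn with h' | h'
    · rw [← h'] at hroot; simp at hroot; linarith
    · exact h'
  have hγ : q * (a 3 / q) = a 3 := by field_simp
  have hγ2 : a 2 = a 3 / q + q * (a 1 - q * a 0) := by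
    field_simp
    linarith
  refine ⟨q, a 1 - q * a 0, a 3 / q, by ring, hγ2, hγ.symm, by positivity, ?_⟩
  generalize a 3 / q = γ at *
  have hγp : 0 < γ := by
    apply pos_of_mul_pos_right (a := q) _ qpos.le
    rw [hγ]; exact a3
  apply quad_seq (fun n => Nat.casesOn n (h 0) (fun m => h (m+1) - q * h m)) (a 0) _ γ a0 hγp hp0
  · intro n
    rcases n with _ | n
    · exact hnn 0
    · have := rle n
      rw [hr, le_div_iff₀ (hp n)] at this
      simpa using this
  · intro n
    rcases n with _ | n
    · change a 0 * (h 2 - q * h 1) = (a 1 - q * a 0) * (h 1 - q * h 0) - γ * h 0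
      linear_combination hr2 - h 0 * hγ2
    · change a 0 * (h (n+3) - q * h (n+2)) = (a 1 - q * a 0) * (h (n+2) - q * h (n+1)) - γ * (h (n+1) - q * h n)
      linear_combination hr3 n - h (n+1) * hγ2 - h n * hγ

/-- roots of real quadratics with nonnegative discriminant -/
lemma quad_real (e b g : ℝ) (he : 0 < e) (h : 4*e*g ≤ b^2) (z : ℂ)
    (hz : (g:ℂ) + b * z + e * z^2 = 0) : ∃ x : ℝ, z = x := by
  set S := Real.sqrt (b^2-4*e*g) with hS
  have hS2 : S^2 = b^2-4*e*g := Real.sq_sqrt (by linarith)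
  have hS2' : (S:ℂ)^2 = b^2-4*e*g := by exact_mod_cast hS2
  have heC : (e:ℂ) ≠ 0 := by exact_mod_cast he.ne'
  have hf : (2*e*z+b-S)*(2*e*z+b+S) = 0 := by
    linear_combination 4*e*hz - hS2'
  rcases mul_eq_zero.1 hf with h1 | h1
  · refine ⟨(S-b)/(2*e), ?_⟩
    push_cast
    field_simp
    linear_combination h1
  · refine ⟨(-S-b)/(2*e), ?_⟩
    push_cast
    field_simp
    linear_combination h1

lemma quad_disc (e b g : ℝ) (he : 0 < e)
    (h : ∀ z : ℂ, (g:ℂ) + b * z + e * z^2 = 0 → ∃ x : ℝ, z = x) : 4*e*g ≤ b^2 := by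
  by_contra hlt
  push Not at hlt
  set S := Real.sqrt (4*e*g-b^2) with hS
  have hS2 : S^2 = 4*e*g-b^2 := Real.sq_sqrt (by linarith)
  have hS0 : 0 < S := Real.sqrt_pos.2 (by linarith)
  have hS2' : (S:ℂ)^2 = 4*e*g-b^2 := by exact_mod_cast hS2
  have heC : (e:ℂ) ≠ 0 := by exact_mod_cast he.ne'
  obtain ⟨x, hx⟩ := h ((-b + S*Complex.I)/(2*e)) (by
    field_simp
    linear_combination (-hS2') + S^2 * Complex.I_sq)
  have h1 : -(b:ℂ) + S*Complex.I = 2*e*x := by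
    rw [← hx]; field_simp
  have := congrArg Complex.im h1
  simp at this
  linarith

lemma disc_of_real (A0 A1 A2 A3 : ℝ) (h0 : 0 < A0) (h1 : 0 < A1) (h2 : 0 < A2) (h3 : 0 < A3)
    (h : ∀ z : ℂ, (A0 : ℂ) + (A1 : ℂ) * z + (A2 : ℂ) * z ^ 2 + (A3 : ℂ) * z ^ 3 = 0 →
          ∃ x : ℝ, z = (x : ℂ)) :
    0 ≤ A1^2*A2^2 - 4*A0*A2^3 - 4*A1^3*A3 + 18*A0*A1*A2*A3 - 27*A0^2*A3^2 := by
  obtain ⟨c, hc, hr⟩ := cubic_root _ _ _ _ h0.le h1.le h2.le h3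
  obtain ⟨b, hb⟩ : ∃ b, b = A2 - A3 * c := ⟨_, rfl⟩
  obtain ⟨g, hg⟩ : ∃ g, g = A1 - b * c := ⟨_, rfl⟩
  have e2 : A2 = b + A3 * c := by linarith
  have e1 : A1 = g + b * c := by linarith
  have e0 : A0 = g * c := by
    rw [e2, e1] at hr
    linarith
  have hq := quad_disc A3 b g h3 (by
    intro z hz
    apply h
    rw [e0, e1, e2]
    push_cast
    linear_combination (z + c) * hz)
  have e : A1^2*A2^2 - 4*A0*A2^3 - 4*A1^3*A3 + 18*A0*A1*A2*A3 - 27*A0^2*A3^2 =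
    (A3*c^2-b*c+g)^2 * (b^2 - 4*A3*g) := by
    rw [e0, e1, e2]; ring
  rw [e]
  have := sub_nonneg.2 hq
  positivity

lemma main_suff (a : ℕ → ℝ) (hpos : ∀ k ≤ 3, 0 < a k) (h4 : ∀ k, 4 ≤ k → a k = 0)
    (hr1 : ∀ z : ℂ, (a 0 : ℂ) + (a 1 : ℂ) * z + (a 2 : ℂ) * z ^ 2 + (a 3 : ℂ) * z ^ 3 = 0 →
          ∃ x : ℝ, z = (x : ℂ))
    (hr2 : ∀ z : ℂ, (a 1 : ℂ) * z + (a 2 : ℂ) * z ^ 2 + (a 3 : ℂ) * z ^ 3 = 0 →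
          ∃ x : ℝ, z = (x : ℂ))
    (b : ℕ → ℝ) (hb : IsMultiplyPositive 3 b) : IsTotallyPositive fun k => a k * b k := by
  have a0 := hpos 0 (by norm_num)
  have a1 := hpos 1 (by norm_num)
  have a2 := hpos 2 (by norm_num)
  have a3 := hpos 3 (by norm_num)
  have hd := disc_of_real _ _ _ _ a0 a1 a2 a3 hr1
  have hq := quad_disc (a 3) (a 2) (a 1) a3 (by
    intro z hz
    apply hr2
    linear_combination z * hz)
  have bnn : ∀ k, 0 ≤ b k := by
    intro k
    have := hb 1 (by norm_num) ![0] ![k] (Subsingleton.strictMono _) (Subsingleton.strictMono _)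
    simpa using this
  have m1 := hb 2 (by norm_num) ![0, 1] ![1, 2] (by decide) (by decide)
  have m2 := hb 2 (by norm_num) ![0, 1] ![2, 3] (by decide) (by decide)
  have m3 := hb 2 (by norm_num) ![0, 1] ![1, 3] (by decide) (by decide)
  have m4 := hb 3 (by norm_num) ![0, 1, 2] ![1, 2, 3] (by decide) (by decide)
  simp [Matrix.det_fin_two] at m1 m2 m3
  simp [Matrix.det_fin_three] at m4
  have key := disc_main (a 0) (a 1) (a 2) (a 3) (b 0) (b 1) (b 2) (b 3) a0 a1 a2 a3 (by linarith) hd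
    (bnn 0) (bnn 1) (bnn 2) (bnn 3) (by nlinarith) (by nlinarith) (by nlinarith) (by nlinarith)
  exact tp_of_disc (fun k => a k * b k) (mul_nonneg a0.le (bnn 0)) (mul_nonneg a1.le (bnn 1))
    (mul_nonneg a2.le (bnn 2)) (mul_nonneg a3.le (bnn 3)) (fun k hk => by simp [h4 k hk]) key

lemma main_nec (a : ℕ → ℝ) (hpos : ∀ k ≤ 3, 0 < a k) (h4 : ∀ k, 4 ≤ k → a k = 0)
    (ha : IsTPPreserver a) :
      ((∀ z : ℂ, (a 0 : ℂ) + (a 1 : ℂ) * z + (a 2 : ℂ) * z ^ 2 + (a 3 : ℂ) * z ^ 3 = 0 →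
          ∃ x : ℝ, z = (x : ℂ)) ∧
       (∀ z : ℂ, (a 1 : ℂ) * z + (a 2 : ℂ) * z ^ 2 + (a 3 : ℂ) * z ^ 3 = 0 →
          ∃ x : ℝ, z = (x : ℂ))) := by
  constructor
  · have tp : IsTotallyPositive a := by
      have := ha _ tp_ones
      simpa using this
    obtain ⟨q, b, γ, e1, e2, e3, hγ, hq⟩ := cubic_of_tp a hpos h4 tp
    intro z hz
    have hf : (1 + q * z) * ((a 0 : ℂ) + b * z + γ * z^2) = 0 := by
      rw [e1, e2, e3] at hz
      push_cast at hz
      linear_combination hz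
    rcases mul_eq_zero.1 hf with h | h
    · have q0 : (q:ℂ) ≠ 0 := by
        intro h0; rw [h0] at h; simp at h
      refine ⟨-1/q, ?_⟩
      push_cast
      field_simp
      linear_combination h
    · exact quad_real γ b (a 0) hγ (by linarith) z h
  · have tp : IsTotallyPositive (fun k => a (k+1)) := by
      intro n i j hi hj
      have := ha _ tp_ones_shift n i (fun q => j q + 1) hi (fun p q h => by simpa using hj h)
      convert this using 2
      ext p q
      simp only [Matrix.of_apply]
      by_cases h : i p ≤ j q
      · rw [if_pos h, if_pos (by omega), if_neg (by omega), mul_one]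
        congr 1; omega
      · rw [if_neg h]
        split_ifs
        · simp
        · omega
        · rfl
    have hq := quad_of_tp _ (hpos 1 (by norm_num)) (hpos 3 (by norm_num))
      (fun k hk => h4 _ (by omega)) tp
    simp only [zero_add, Nat.reduceAdd] at hq
    intro z hz
    have hf : z * ((a 1 : ℂ) + a 2 * z + a 3 * z^2) = 0 := by linear_combination hz
    rcases mul_eq_zero.1 hf with h | h
    · exact ⟨0, by simpa using h⟩
    · exact quad_real (a 3) (a 2) (a 1) (hpos 3 (by norm_num)) (by linarith) z h

/-- four-term sequences. -/
theorem stmt_2 (a : ℕ → ℝ) (hpos : ∀ k ≤ 3, 0 < a k) (h4 : ∀ k, 4 ≤ k → a k = 0) :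
    (IsTPPreserver a ↔
      ((∀ z : ℂ, (a 0 : ℂ) + (a 1 : ℂ) * z + (a 2 : ℂ) * z ^ 2 + (a 3 : ℂ) * z ^ 3 = 0 →
          ∃ x : ℝ, z = (x : ℂ)) ∧
       (∀ z : ℂ, (a 1 : ℂ) * z + (a 2 : ℂ) * z ^ 2 + (a 3 : ℂ) * z ^ 3 = 0 →
          ∃ x : ℝ, z = (x : ℂ)))) ∧
    (IsTPPreserver a ↔
      ∀ b : ℕ → ℝ, IsMultiplyPositive 3 b → IsTotallyPositive fun k => a k * b k) := by
  have hsub : (∀ b : ℕ → ℝ, IsMultiplyPositive 3 b → IsTotallyPositive fun k => a k * b k) →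
      IsTPPreserver a := fun h b hb => h b (fun n _ => hb n)
  refine ⟨⟨main_nec a hpos h4, fun h => hsub (main_suff a hpos h4 h.1 h.2)⟩, ?_, hsub⟩
  intro h
  have := main_nec a hpos h4 h
  exact main_suff a hpos h4 this.1 this.2
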